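/- arXiv:2204.04755 — 5 statements merged into one kernel-verified Lean document; each statement's English description precedes it below -/
import Mathlib

section
/- Let F be a finite field with |F| = q. The symplectic graph Sp(4,q) is a strongly regular graph with parameters (q³+q²+q+1, q²+q, q−1, q+1). -/
open scoped Classical LinearAlgebra.Projectivization

/-- The symplectic form on `F^4` given by `u₀w₁ − u₁w₀ + u₂w₃ − u₃w₂`. -/
def sympForm {F : Type} [Field F] (u w : Fin 4 → F) : F :=
  u 0 * w 1 - u 1 * w 0 + u 2 * w 3 - u 3 * w 2

/-- The symplectic graph `Sp(4,q)`: vertices are the points of `PG(3,q)`, two distinct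
points being adjacent iff (representatives of) them pair to zero under the symplectic form.
(The condition is independent of the chosen representatives, so using `rep` is harmless.) -/
def spGraph (F : Type) [Field F] : SimpleGraph (ℙ F (Fin 4 → F)) :=
  SimpleGraph.fromRel (fun x y => sympForm x.rep y.rep = 0)

noncomputable instance (F : Type) [Field F] [Fintype F] : Fintype (ℙ F (Fin 4 → F)) :=
  have : Finite (ℙ F (Fin 4 → F)) := Quotient.finite _
  Fintype.ofFinite _

/-!
Let `x^⊥` be the polar hyperplane of a point `x` under a nondegenerate alternating form. Every point
lies on its own polar, so the neighbours of `x` are `x^⊥ \ {x}`. For `x ≠ y` the intersection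
`x^⊥ ∩ y^⊥` is a projective subspace of codimension two, which contains both `x` and `y` if they are
adjacent and neither of them otherwise. All parameters are therefore numbers of points of projective
subspaces, minus the one or two points removed.
-/

section ProjectiveCounting

open Module

variable {K V : Type*} [Field K] [AddCommGroup V] [Module K V]

lemma mem_projectivization_iff_rep_mem {W : Submodule K V} {p : ℙ K V} :
    p ∈ W.projectivization ↔ p.rep ∈ W := by
  rw [← W.mk_mem_projectivization_iff p.rep_nonzero, p.mk_rep]

lemma range_map_subtype_eq_projectivization (W : Submodule K V) :
    Set.range (Projectivization.map W.subtype W.injective_subtype) = W.projectivization := by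
  ext p
  refine ⟨?_, fun hp => ?_⟩
  · rintro ⟨x, rfl⟩
    induction x using Projectivization.ind with
    | h v => exact v.2
  · have hrep : p.rep ∈ W := mem_projectivization_iff_rep_mem.1 hp
    refine ⟨Projectivization.mk K ⟨p.rep, hrep⟩ (Subtype.coe_ne_coe.1 p.rep_nonzero), ?_⟩
    rw [Projectivization.map_mk]
    exact p.mk_rep

lemma ncard_projectivization [Finite K] (W : Submodule K V) :
    (W.projectivization : Set (ℙ K V)).ncard =
      ∑ i ∈ Finset.range (finrank K W), Nat.card K ^ i := by
  rw [← range_map_subtype_eq_projectivization, ← Set.image_univ,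
    Set.ncard_image_of_injective _ (Projectivization.map_injective _ _), Set.ncard_univ,
    Projectivization.card_of_finrank K W rfl]

lemma ncard_forall_dual_rep_eq_zero [Finite K] [FiniteDimensional K V] {ι : Type*} [Fintype ι]
    {f : ι → Dual K V} (hf : LinearIndependent K f) {n : ℕ}
    (hn : finrank K V = n + Fintype.card ι) :
    {p : ℙ K V | ∀ i, f i p.rep = 0}.ncard = ∑ i ∈ Finset.range n, Nat.card K ^ i := by
  set W := (Submodule.span K (Set.range f)).dualCoannihilator
  have hW : finrank K W = n := by
    have hsum : Fintype.card ι + finrank K W = finrank K V := by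
      rw [← finrank_span_eq_card hf, Subspace.finrank_add_finrank_dualCoannihilator_eq]
    lia
  have hzeros : {p : ℙ K V | ∀ i, f i p.rep = 0} = W.projectivization := by
    ext p
    rw [SetLike.mem_coe, mem_projectivization_iff_rep_mem, ← SetLike.mem_coe,
      Submodule.coe_dualCoannihilator_span]
    simp
  rw [hzeros, ncard_projectivization, hW]

end ProjectiveCounting

section OrthogonalityGraph

open Module

variable {K V : Type*} [Field K] [AddCommGroup V] [Module K V]
  {B : LinearMap.BilinForm K V} {x y : ℙ K V}

/-- The polar of a point `x` of projective space with respect to a bilinear form: the points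
right-orthogonal to `x`. Orthogonality does not depend on the representatives. -/
def projectivePolar (B : LinearMap.BilinForm K V) (x : ℙ K V) : Set (ℙ K V) :=
  {p | B x.rep p.rep = 0}

/-- The orthogonality graph of a bilinear form on projective space: distinct points are adjacent
when they are orthogonal, in either order. For a nondegenerate alternating form on a space of
dimension `2 * m` over the field with `q` elements this is the symplectic graph `Sp(2m,q)`. -/
def orthogonalityGraph (B : LinearMap.BilinForm K V) : SimpleGraph (ℙ K V) :=
  SimpleGraph.fromRel fun x y => B x.rep y.rep = 0

lemma mem_projectivePolar_self (hB : B.IsAlt) (x : ℙ K V) : x ∈ projectivePolar B x :=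
  hB x.rep

lemma mem_projectivePolar_comm (hB : B.IsRefl) :
    x ∈ projectivePolar B y ↔ y ∈ projectivePolar B x :=
  ⟨fun h => hB _ _ h, fun h => hB _ _ h⟩

lemma ncard_projectivePolar [Finite K] (hB : B.SeparatingLeft) {n : ℕ}
    (hn : finrank K V = n + 1) (x : ℙ K V) :
    (projectivePolar B x).ncard = ∑ i ∈ Finset.range n, Nat.card K ^ i := by
  have := FiniteDimensional.of_finrank_eq_succ hn
  have hli : LinearIndependent K ![x.rep] := by simpa using x.rep_nonzero
  simpa [projectivePolar] using ncard_forall_dual_rep_eq_zero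
    (hli.map' B (LinearMap.separatingLeft_iff_ker_eq_bot.1 hB)) (n := n) (by simpa using hn)

lemma ncard_projectivePolar_inter [Finite K] (hB : B.SeparatingLeft) {n : ℕ}
    (hn : finrank K V = n + 2) (hxy : x ≠ y) :
    (projectivePolar B x ∩ projectivePolar B y).ncard =
      ∑ i ∈ Finset.range n, Nat.card K ^ i := by
  have := FiniteDimensional.of_finrank_eq_succ hn
  have hli := Projectivization.linearIndependent_pair_iff_ne.2 hxy
  simpa [projectivePolar, Set.ofPred_and] using ncard_forall_dual_rep_eq_zero
    (hli.map' B (LinearMap.separatingLeft_iff_ker_eq_bot.1 hB)) (n := n) (by simpa using hn)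

lemma orthogonalityGraph_adj_iff (hB : B.IsRefl) :
    (orthogonalityGraph B).Adj x y ↔ x ≠ y ∧ y ∈ projectivePolar B x := by
  rw [orthogonalityGraph, SimpleGraph.fromRel_adj]
  exact and_congr_right' (or_iff_left_of_imp (hB _ _))

lemma neighborSet_orthogonalityGraph (hB : B.IsRefl) (x : ℙ K V) :
    (orthogonalityGraph B).neighborSet x = projectivePolar B x \ {x} := by
  ext p
  simp [orthogonalityGraph_adj_iff hB, and_comm, eq_comm]

lemma commonNeighbors_orthogonalityGraph (hB : B.IsRefl) (x y : ℙ K V) :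
    (orthogonalityGraph B).commonNeighbors x y =
      (projectivePolar B x ∩ projectivePolar B y) \ {x, y} := by
  rw [SimpleGraph.commonNeighbors, neighborSet_orthogonalityGraph hB,
    neighborSet_orthogonalityGraph hB]
  grind

lemma pair_subset_projectivePolar_inter (hB : B.IsAlt)
    (hxy : (orthogonalityGraph B).Adj x y) :
    {x, y} ⊆ projectivePolar B x ∩ projectivePolar B y := by
  have hy := ((orthogonalityGraph_adj_iff hB.isRefl).1 hxy).2
  have hx := (mem_projectivePolar_comm hB.isRefl).1 hy
  simp [Set.insert_subset_iff, mem_projectivePolar_self hB, hx, hy]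

lemma disjoint_projectivePolar_inter_pair (hB : B.IsRefl) (hne : x ≠ y)
    (hxy : ¬(orthogonalityGraph B).Adj x y) :
    Disjoint (projectivePolar B x ∩ projectivePolar B y) {x, y} := by
  have hy : y ∉ projectivePolar B x := fun h => hxy ((orthogonalityGraph_adj_iff hB).2 ⟨hne, h⟩)
  have hx : x ∉ projectivePolar B y := mt (mem_projectivePolar_comm hB).1 hy
  simp [hx, hy]

/-- For `n = 0` the graph has no edges, so the truncated difference `0 - 2` constrains nothing. -/
theorem spGraph_isSRGWith_general [Finite K] [Fintype (ℙ K V)] (hB : B.IsAlt)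
    (hsep : B.SeparatingLeft) {n : ℕ} (hn : finrank K V = n + 2) :
    (orthogonalityGraph B).IsSRGWith
      (∑ i ∈ Finset.range (n + 2), Nat.card K ^ i)
      (∑ i ∈ Finset.range n, Nat.card K ^ (i + 1))
      (∑ i ∈ Finset.range n, Nat.card K ^ i - 2)
      (∑ i ∈ Finset.range n, Nat.card K ^ i) where
  card := by rw [← Nat.card_eq_fintype_card, Projectivization.card_of_finrank K V hn]
  regular x := by
    rw [← SimpleGraph.card_neighborSet_eq_degree, Set.fintypeCard_eq_ncard,
      neighborSet_orthogonalityGraph hB.isRefl,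
      Set.ncard_sdiff_singleton_of_mem (mem_projectivePolar_self hB x),
      ncard_projectivePolar hsep hn, Finset.sum_range_succ', pow_zero, Nat.add_sub_cancel]
  of_adj x y hxy := by
    rw [Set.fintypeCard_eq_ncard, commonNeighbors_orthogonalityGraph hB.isRefl,
      Set.ncard_sdiff (pair_subset_projectivePolar_inter hB hxy),
      ncard_projectivePolar_inter hsep hn hxy.ne, Set.ncard_pair hxy.ne]
  of_not_adj x y hne hxy := by
    rw [Set.fintypeCard_eq_ncard, commonNeighbors_orthogonalityGraph hB.isRefl,
      (disjoint_projectivePolar_inter_pair hB.isRefl hne hxy).sdiff_eq_left,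
      ncard_projectivePolar_inter hsep hn hne]

end OrthogonalityGraph

section SympForm

variable (F : Type) [Field F]

/-- The symplectic form `sympForm` on `F^4` as a bilinear form. -/
def sympBilinForm : LinearMap.BilinForm F (Fin 4 → F) :=
  LinearMap.mk₂ F sympForm
    (by intros; simp only [sympForm, Pi.add_apply]; ring)
    (by intros; simp only [sympForm, Pi.smul_apply, smul_eq_mul]; ring)
    (by intros; simp only [sympForm, Pi.add_apply]; ring)
    (by intros; simp only [sympForm, Pi.smul_apply, smul_eq_mul]; ring)

lemma isAlt_sympBilinForm : (sympBilinForm F).IsAlt := fun u => by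
  simp only [sympBilinForm, LinearMap.mk₂_apply, sympForm]
  ring

lemma separatingLeft_sympBilinForm : (sympBilinForm F).SeparatingLeft := fun u hu => by
  have hsingle (i : Fin 4) : sympForm u (Pi.single i 1) = 0 := hu _
  ext i
  fin_cases i
  · simpa [sympForm] using hsingle 1
  · simpa [sympForm] using hsingle 0
  · simpa [sympForm] using hsingle 3
  · simpa [sympForm] using hsingle 2

lemma spGraph_eq_orthogonalityGraph : spGraph F = orthogonalityGraph (sympBilinForm F) :=
  rfl

end SympForm

/-- `Sp(4,q)` is strongly regular with parameters
`(q³+q²+q+1, q²+q, q−1, q+1)`. -/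
theorem spGraph_isSRGWith (F : Type) [Field F] [Fintype F] (q : ℕ)
    (hq : Fintype.card F = q) :
    (spGraph F).IsSRGWith (q ^ 3 + q ^ 2 + q + 1) (q ^ 2 + q) (q - 1) (q + 1) := by
  rw [spGraph_eq_orthogonalityGraph]
  convert spGraph_isSRGWith_general (isAlt_sympBilinForm F) (separatingLeft_sympBilinForm F)
    (n := 2) (by simp) using 1 <;> simp [Finset.sum_range_succ, hq] <;> lia
end

section
/- Let F be a finite field with |F| = q. For every vertex v of the symplectic graph Sp(4,q), the subgraph induced on the set of vertices that are distinct from v and not adjacent to v (the second subconstituent, which has q³ vertices) is a distance-regular graph with intersection array {q²−1, q²−q, 1; 1, q, q²−1}. -/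
open scoped Classical LinearAlgebra.Projectivization

/-- `H` is a connected distance-regular graph of diameter 3 with intersection array
`{b₀, b₁, b₂; c₁, c₂, c₃}`: every vertex has degree `b₀`, and for vertices `u, w` at
distance `i` (for `1 ≤ i ≤ 3`), `w` has exactly `cᵢ` neighbours at distance `i − 1`
from `u` and exactly `bᵢ` neighbours at distance `i + 1` from `u` (with `b₃ = 0`). -/
def IsDRG3 {V : Type*} (H : SimpleGraph V) (b0 b1 b2 c1 c2 c3 : ℕ) : Prop :=
  H.Connected ∧ (∀ u w : V, H.dist u w ≤ 3) ∧ (∃ u w : V, H.dist u w = 3) ∧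
  (∀ x : V, (H.neighborSet x).ncard = b0) ∧
  (∀ u w : V, H.dist u w = 1 →
    {y | H.Adj w y ∧ H.dist u y = 0}.ncard = c1 ∧
    {y | H.Adj w y ∧ H.dist u y = 2}.ncard = b1) ∧
  (∀ u w : V, H.dist u w = 2 →
    {y | H.Adj w y ∧ H.dist u y = 1}.ncard = c2 ∧
    {y | H.Adj w y ∧ H.dist u y = 3}.ncard = b2) ∧
  (∀ u w : V, H.dist u w = 3 →
    {y | H.Adj w y ∧ H.dist u y = 2}.ncard = c3 ∧
    {y | H.Adj w y ∧ H.dist u y = 4}.ncard = 0)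

/-!
Let `B` be the form and scale the representatives of the points not collinear with `[v]` so that
`B v x = 1`. They fill an affine hyperplane, on which two points are adjacent when `B x y = 0`. Call
the lines in direction `v` fibres. Since `B y (x + t • v) = B y x - t`, every point has exactly one
neighbour in each fibre other than its own, so the graph is a cover of a complete graph. For `x` and
`y` in distinct fibres the vectors `v`, `x`, `y` are linearly independent, so nondegeneracy fixes
the number of points orthogonal to both. Distances in such a cover depend only on adjacency and on
fibres: distance three means distinct points of one fibre.
-/

section CompleteGraphCover

variable {V I : Type*} {H : SimpleGraph V} {p : V → I} {k a c : ℕ}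

/-- Antipodal covers of complete graphs, in the sense of Godsil and Hensel: the map `p` sends a
vertex to its fibre, distinct fibres are joined by a perfect matching, and the numbers of common
neighbours are `a` and `c`. The base graph is the complete graph on `Set.range p`. -/
structure IsCompleteGraphCover (H : SimpleGraph V) (p : V → I) (k a c : ℕ) : Prop where
  ne_of_adj {x y : V} : H.Adj x y → p x ≠ p y
  existsUnique_adj {x y : V} : p x ≠ p y → ∃! z, p z = p x ∧ H.Adj y z
  ncard_neighborSet (x : V) : (H.neighborSet x).ncard = k
  ncard_commonNeighbors_of_adj {x y : V} : H.Adj x y → (H.commonNeighbors x y).ncard = a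
  ncard_commonNeighbors_of_not_adj {x y : V} :
    p x ≠ p y → ¬ H.Adj x y → (H.commonNeighbors x y).ncard = c

namespace IsCompleteGraphCover

theorem eq_of_adj_of_adj (h : IsCompleteGraphCover H p k a c) {x y z : V} (hxy : p x = p y)
    (hx : H.Adj z x) (hy : H.Adj z y) : x = y :=
  (h.existsUnique_adj (h.ne_of_adj hx).symm).unique ⟨rfl, hx⟩ ⟨hxy.symm, hy⟩

theorem exists_adj (h : IsCompleteGraphCover H p k a c) (hk : k ≠ 0) (x : V) :
    ∃ y, H.Adj x y :=
  Set.nonempty_of_ncard_ne_zero (h.ncard_neighborSet x ▸ hk)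

theorem dist_eq_two (h : IsCompleteGraphCover H p k a c) (hc : c ≠ 0) {x y : V}
    (hp : p x ≠ p y) (hxy : ¬ H.Adj x y) : H.dist x y = 2 := by
  have hcommon : (H.commonNeighbors x y).Nonempty :=
    Set.nonempty_of_ncard_ne_zero (h.ncard_commonNeighbors_of_not_adj hp hxy ▸ hc)
  simp [SimpleGraph.dist, SimpleGraph.edist_eq_two_iff.2 ⟨ne_of_apply_ne p hp, hxy, hcommon⟩]

theorem reachable_of_ne (h : IsCompleteGraphCover H p k a c) (hc : c ≠ 0) {x y : V}
    (hp : p x ≠ p y) : H.Reachable x y := by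
  by_cases hxy : H.Adj x y
  · exact hxy.reachable
  · exact .of_dist_ne_zero (by simp [h.dist_eq_two hc hp hxy])

theorem preconnected (h : IsCompleteGraphCover H p k a c) (hk : k ≠ 0) (hc : c ≠ 0) :
    H.Preconnected := by
  intro x y
  by_cases hp : p x = p y
  · obtain ⟨z, hyz⟩ := h.exists_adj hk y
    exact (h.reachable_of_ne hc (hp ▸ h.ne_of_adj hyz)).trans hyz.reachable.symm
  · exact h.reachable_of_ne hc hp

theorem dist_eq_three (h : IsCompleteGraphCover H p k a c) (hk : k ≠ 0) (hc : c ≠ 0) {x y : V}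
    (hp : p x = p y) (hxy : x ≠ y) : H.dist x y = 3 := by
  have hadj : ¬ H.Adj x y := fun hadj ↦ h.ne_of_adj hadj hp
  have hcommon : H.commonNeighbors x y = ∅ := Set.eq_empty_of_forall_notMem fun z hz ↦
    hxy (h.eq_of_adj_of_adj hp hz.1.symm hz.2.symm)
  have hlower : 2 < H.dist x y := by
    have := SimpleGraph.two_lt_edist_iff.2 ⟨hxy, hadj, hcommon⟩
    rw [← (h.preconnected hk hc x y).coe_dist_eq_edist] at this
    exact_mod_cast this
  obtain ⟨z, hyz⟩ := h.exists_adj hk y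
  have hxz : H.dist x z = 2 := h.dist_eq_two hc (hp ▸ h.ne_of_adj hyz) fun hxz ↦
    Set.notMem_empty z (hcommon ▸ ⟨hxz, hyz⟩)
  have hzy : H.dist z y = 1 := SimpleGraph.dist_eq_one_iff_adj.2 hyz.symm
  have htriangle := (h.preconnected hk hc x z).dist_triangle_left y
  lia

theorem dist_eq_two_iff (h : IsCompleteGraphCover H p k a c) (hk : k ≠ 0) (hc : c ≠ 0)
    {x y : V} : H.dist x y = 2 ↔ p x ≠ p y ∧ ¬ H.Adj x y := by
  refine ⟨fun hd ↦ ⟨fun hp ↦ ?_, fun hadj ↦ ?_⟩, fun ⟨hp, hadj⟩ ↦ h.dist_eq_two hc hp hadj⟩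
  · obtain rfl | hxy := eq_or_ne x y
    · simp at hd
    · simp [h.dist_eq_three hk hc hp hxy] at hd
  · simp [SimpleGraph.dist_eq_one_iff_adj.2 hadj] at hd

theorem dist_eq_three_iff (h : IsCompleteGraphCover H p k a c) (hk : k ≠ 0) (hc : c ≠ 0)
    {x y : V} : H.dist x y = 3 ↔ p x = p y ∧ x ≠ y := by
  refine ⟨fun hd ↦ ⟨?_, ?_⟩, fun ⟨hp, hxy⟩ ↦ h.dist_eq_three hk hc hp hxy⟩
  · by_contra hp
    by_cases hadj : H.Adj x y
    · simp [SimpleGraph.dist_eq_one_iff_adj.2 hadj] at hd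
    · simp [h.dist_eq_two hc hp hadj] at hd
  · rintro rfl
    simp at hd

theorem dist_le_three (h : IsCompleteGraphCover H p k a c) (hk : k ≠ 0) (hc : c ≠ 0) (x y : V) :
    H.dist x y ≤ 3 := by
  by_cases hp : p x = p y
  · obtain rfl | hxy := eq_or_ne x y
    · simp
    · exact (h.dist_eq_three hk hc hp hxy).le
  · by_cases hadj : H.Adj x y
    · simp [SimpleGraph.dist_eq_one_iff_adj.2 hadj]
    · simp [h.dist_eq_two hc hp hadj]

theorem ncard_adj_and_dist_eq_two_of_adj (h : IsCompleteGraphCover H p k a c) (hk : k ≠ 0)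
    (hc : c ≠ 0) {u w : V} (huw : H.Adj u w) :
    {y | H.Adj w y ∧ H.dist u y = 2}.ncard = k - 1 - a := by
  have hset : {y | H.Adj w y ∧ H.dist u y = 2} =
      (H.neighborSet w \ {u}) \ H.commonNeighbors u w := by
    ext y
    have hne : H.Adj w y → y ≠ u → p u ≠ p y := fun hwy hyu hp ↦
      hyu (h.eq_of_adj_of_adj hp huw.symm hwy).symm
    have hself : p u ≠ p y → y ≠ u := by rintro hp rfl; exact hp rfl
    simp only [Set.mem_ofPred_eq, h.dist_eq_two_iff hk hc, Set.mem_sdiff,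
      SimpleGraph.mem_neighborSet, Set.mem_singleton_iff, SimpleGraph.mem_commonNeighbors]
    tauto
  have hfinite : (H.neighborSet w).Finite :=
    Set.finite_of_ncard_ne_zero (h.ncard_neighborSet w ▸ hk)
  have hsubset : H.commonNeighbors u w ⊆ H.neighborSet w \ {u} := fun y hy ↦ ⟨hy.2, hy.1.ne'⟩
  rw [hset, Set.ncard_sdiff hsubset (hfinite.subset fun y hy ↦ hy.2),
    Set.ncard_sdiff_singleton_of_mem ((H.mem_neighborSet w u).2 huw.symm), h.ncard_neighborSet,
    h.ncard_commonNeighbors_of_adj huw]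

theorem ncard_adj_and_dist_eq_three_of_ne (h : IsCompleteGraphCover H p k a c) (hk : k ≠ 0)
    (hc : c ≠ 0) {u w : V} (hp : p u ≠ p w) (huw : ¬ H.Adj u w) :
    {y | H.Adj w y ∧ H.dist u y = 3}.ncard = 1 := by
  obtain ⟨z, ⟨hzu, hwz⟩, hunique⟩ := h.existsUnique_adj hp
  refine Set.ncard_eq_one.2 ⟨z, Set.ext fun y ↦ ?_⟩
  rw [Set.mem_ofPred_eq, h.dist_eq_three_iff hk hc, Set.mem_singleton_iff]
  refine ⟨fun ⟨hwy, huy, _⟩ ↦ hunique y ⟨huy.symm, hwy⟩, ?_⟩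
  rintro rfl
  refine ⟨hwz, hzu.symm, ?_⟩
  rintro rfl
  exact huw hwz.symm

theorem adj_and_dist_eq_two_iff_adj (h : IsCompleteGraphCover H p k a c) (hk : k ≠ 0)
    (hc : c ≠ 0) {u w y : V} (hp : p u = p w) (huw : u ≠ w) :
    H.Adj w y ∧ H.dist u y = 2 ↔ H.Adj w y := by
  rw [h.dist_eq_two_iff hk hc, and_iff_left_iff_imp]
  exact fun hwy ↦ ⟨hp ▸ h.ne_of_adj hwy, fun huy ↦
    huw (h.eq_of_adj_of_adj hp huy.symm hwy.symm)⟩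

theorem isDRG3 (h : IsCompleteGraphCover H p k a c) (hk : k ≠ 0) (hc : c ≠ 0)
    (hp : ¬ Function.Injective p) : IsDRG3 H k (k - 1 - a) 1 1 c k := by
  obtain ⟨x, y, hpxy, hxy⟩ := Function.not_injective_iff.1 hp
  have hconn : H.Connected := { preconnected := h.preconnected hk hc, nonempty := ⟨x⟩ }
  refine ⟨hconn, h.dist_le_three hk hc, ⟨x, y, h.dist_eq_three hk hc hpxy hxy⟩,
    h.ncard_neighborSet, fun u w huw ↦ ?_, fun u w huw ↦ ?_, fun u w huw ↦ ?_⟩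
  · rw [SimpleGraph.dist_eq_one_iff_adj] at huw
    refine ⟨Set.ncard_eq_one.2 ⟨u, Set.ext fun y ↦ ?_⟩,
      h.ncard_adj_and_dist_eq_two_of_adj hk hc huw⟩
    simp only [Set.mem_ofPred_eq, hconn.dist_eq_zero_iff, Set.mem_singleton_iff]
    exact ⟨fun hy ↦ hy.2.symm, fun hy ↦ ⟨hy ▸ huw.symm, hy.symm⟩⟩
  · obtain ⟨hne, hadj⟩ := (h.dist_eq_two_iff hk hc).1 huw
    refine ⟨?_, h.ncard_adj_and_dist_eq_three_of_ne hk hc hne hadj⟩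
    simp only [SimpleGraph.dist_eq_one_iff_adj, and_comm (b := H.Adj u _)]
    exact h.ncard_commonNeighbors_of_not_adj hne hadj
  · obtain ⟨heq, hne⟩ := (h.dist_eq_three_iff hk hc).1 huw
    simp only [h.adj_and_dist_eq_two_iff_adj hk hc heq hne]
    refine ⟨h.ncard_neighborSet w, ?_⟩
    have hdist (y : V) : H.dist u y ≠ 4 := by have := h.dist_le_three hk hc u y; lia
    simp [hdist]

end IsCompleteGraphCover

end CompleteGraphCover

section Transport

variable {V W : Type*} {G : SimpleGraph V} {H : SimpleGraph W}

theorem edist_apply_le_of_hom (f : G →g H) (x y : V) : H.edist (f x) (f y) ≤ G.edist x y :=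
  le_iInf fun p ↦ by simpa using SimpleGraph.edist_le (p.map f)

theorem dist_apply_iso (e : G ≃g H) (x y : V) : H.dist (e x) (e y) = G.dist x y := by
  refine congrArg ENat.toNat (le_antisymm (edist_apply_le_of_hom e.toHom x y) ?_)
  simpa using edist_apply_le_of_hom e.symm.toHom (e x) (e y)

theorem IsDRG3.of_iso {b0 b1 b2 c1 c2 c3 : ℕ} (h : IsDRG3 G b0 b1 b2 c1 c2 c3) (e : G ≃g H) :
    IsDRG3 H b0 b1 b2 c1 c2 c3 := by
  have hncard (P : W → Prop) : {y | P y}.ncard = {y | P (e y)}.ncard :=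
    congrArg ENat.toNat (Set.encard_preimage_of_bijective e.bijective _).symm
  obtain ⟨hconn, hdiam, ⟨x, y, hxy⟩, hrest⟩ := h
  refine ⟨e.connected_iff.1 hconn, ?_, ⟨e x, e y, by rwa [dist_apply_iso]⟩, ?_⟩
  · simpa only [e.surjective.forall, dist_apply_iso] using hdiam
  · simpa only [e.surjective.forall, dist_apply_iso, hncard, SimpleGraph.neighborSet,
      e.map_adj_iff] using hrest

end Transport

section LinearForms

variable {F V ι : Type*} [Field F] [AddCommGroup V] [Module F V]

theorem surjective_pi_of_linearIndependent [Finite ι] {φ : ι → Module.Dual F V}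
    (hφ : LinearIndependent F φ) : Function.Surjective (LinearMap.pi φ) := by
  have := Fintype.ofFinite ι
  refine LinearMap.dualMap_injective_iff.1 ((injective_iff_map_eq_zero _).2 fun g hg ↦ ?_)
  have hrelation : ∑ i, g (Pi.single i 1) • φ i = 0 := by
    ext x
    have hgx : g (LinearMap.pi φ x) = 0 := LinearMap.congr_fun hg x
    rw [pi_eq_sum_univ' (LinearMap.pi φ x), map_sum] at hgx
    simpa [mul_comm, Pi.single_apply, eq_comm] using hgx
  ext i
  simpa using Fintype.linearIndependent_iff.1 hφ _ hrelation i

theorem ncard_setOf_forall_eq_of_linearIndependent [FiniteDimensional F V] [Fintype ι]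
    {φ : ι → Module.Dual F V} (hφ : LinearIndependent F φ) (c : ι → F) :
    {x | ∀ i, φ i x = c i}.ncard = Nat.card F ^ (Module.finrank F V - Fintype.card ι) := by
  have hsurj := surjective_pi_of_linearIndependent hφ
  obtain ⟨x₀, hx₀⟩ := hsurj c
  have htranslate : {x | ∀ i, φ i x = c i} = (x₀ + ·) '' (LinearMap.pi φ).ker := by
    ext x
    simp [funext_iff, ← hx₀, neg_add_eq_zero, eq_comm (a := φ _ x₀)]
  have hker : Module.finrank F (LinearMap.pi φ).ker = Module.finrank F V - Fintype.card ι := by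
    rw [← (LinearMap.pi φ).finrank_range_add_finrank_ker, LinearMap.range_eq_top.2 hsurj,
      finrank_top, Module.finrank_fintype_fun_eq_card, Nat.add_sub_cancel_left]
  rw [htranslate, Set.ncard_image_of_injective _ (add_right_injective x₀), ← hker]
  exact Module.natCard_eq_pow_finrank (K := F) (V := (LinearMap.pi φ).ker)

end LinearForms

section AffineChart

variable {F V : Type*} [Field F] [AddCommGroup V] [Module F V] {B : LinearMap.BilinForm F V}
  {v : V}

/-- The points of the second subconstituent at `[v]`: each of them has a unique representative `x`
with `B v x = 1`. -/
abbrev AffineChart (B : LinearMap.BilinForm F V) (v : V) : Type _ := {x : V // B v x = 1}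

/-- Orthogonality on the affine chart; this graph is isomorphic to the second subconstituent at
`[v]`. -/
def affineGraph (B : LinearMap.BilinForm F V) (v : V) : SimpleGraph (AffineChart B v) :=
  SimpleGraph.fromRel fun x y ↦ B x y = 0

theorem affineGraph_adj (hB : B.IsAlt) {x y : AffineChart B v} :
    (affineGraph B v).Adj x y ↔ x ≠ y ∧ B x y = 0 := by
  rw [affineGraph, SimpleGraph.fromRel_adj, hB.isRefl.eq_iff (x := (y : V)), or_self]

namespace AffineChart

/-- The fibre of a point of the affine chart: its class modulo the direction `v`. -/
def fibre (x : AffineChart B v) : V ⧸ F ∙ v :=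
  Submodule.Quotient.mk (x : V)

theorem fibre_eq_fibre_iff {x y : AffineChart B v} :
    x.fibre = y.fibre ↔ ∃ t : F, (y : V) = x + t • v := by
  rw [eq_comm, fibre, fibre, Submodule.Quotient.eq, Submodule.mem_span_singleton]
  exact exists_congr fun t ↦ by rw [eq_sub_iff_add_eq', eq_comm]

theorem bilin_add_smul (hB : B.IsAlt) (x : AffineChart B v) (y : V) (t : F) :
    B x (y + t • v) = B x y - t := by
  rw [map_add, map_smul, ← hB.neg_eq v, x.2, smul_eq_mul, mul_neg_one, sub_eq_add_neg]

theorem fibre_ne_of_adj (hB : B.IsAlt) {x y : AffineChart B v}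
    (hxy : (affineGraph B v).Adj x y) : x.fibre ≠ y.fibre := by
  obtain ⟨hne, horth⟩ := (affineGraph_adj hB).1 hxy
  intro hfibre
  obtain ⟨t, ht⟩ := fibre_eq_fibre_iff.1 hfibre
  rw [ht, bilin_add_smul hB, hB, zero_sub, neg_eq_zero] at horth
  exact hne (Subtype.ext (by simp [ht, horth]))

theorem existsUnique_adj (hB : B.IsAlt) {x y : AffineChart B v}
    (hxy : x.fibre ≠ y.fibre) :
    ∃! z, fibre z = x.fibre ∧ (affineGraph B v).Adj y z := by
  let z : AffineChart B v := ⟨x + B y x • v, by simp [hB v, x.2]⟩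
  have hz : x.fibre = z.fibre := fibre_eq_fibre_iff.2 ⟨B y x, rfl⟩
  refine ⟨z, ⟨hz.symm, (affineGraph_adj hB).2 ⟨?_, ?_⟩⟩, fun z' ⟨hz', hyz'⟩ ↦ ?_⟩
  · exact fun hyz ↦ hxy (hyz ▸ hz)
  · simp [z, bilin_add_smul hB]
  · obtain ⟨t, ht⟩ := fibre_eq_fibre_iff.1 hz'.symm
    have horth := ((affineGraph_adj hB).1 hyz').2
    rw [ht, bilin_add_smul hB, sub_eq_zero] at horth
    exact Subtype.ext (by rw [ht, ← horth])

theorem ncard_setOf_bilin_eq_zero [FiniteDimensional F V] (hsep : B.SeparatingLeft) {n : ℕ}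
    {b : Fin n → V} (hb : LinearIndependent F (Matrix.vecCons v b)) :
    {z : AffineChart B v | ∀ i, B (b i) z = 0}.ncard =
      Nat.card F ^ (Module.finrank F V - (n + 1)) := by
  have hforms : LinearIndependent F (B ∘ Matrix.vecCons v b) :=
    hb.map' B (LinearMap.separatingLeft_iff_ker_eq_bot.1 hsep)
  have hcount := ncard_setOf_forall_eq_of_linearIndependent hforms (Matrix.vecCons 1 0)
  rw [Fintype.card_fin] at hcount
  rw [← hcount, ← Set.ncard_image_of_injective _ Subtype.val_injective]
  congr 1
  ext x
  simp [Fin.forall_fin_succ, and_comm]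

theorem direction_ne_zero (x : AffineChart B v) : v ≠ 0 := by
  rintro rfl
  simpa using x.2

theorem linearIndependent_pair (hB : B.IsAlt) (x : AffineChart B v) :
    LinearIndependent F ![v, x] := by
  refine (LinearIndependent.pair_iff' (direction_ne_zero x)).2 fun t ht ↦ ?_
  simpa [← ht, hB v] using x.2

theorem linearIndependent_triple (hB : B.IsAlt) {x y : AffineChart B v}
    (hxy : x.fibre ≠ y.fibre) : LinearIndependent F ![v, x, y] := by
  rw [Fintype.linearIndependent_iff]
  intro g hg
  have hdep : g 0 • v + g 1 • (x : V) + g 2 • (y : V) = 0 := by simpa [Fin.sum_univ_three] using hg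
  have hsum : g 1 + g 2 = 0 := by simpa [hB v, x.2, y.2] using congrArg (B v) hdep
  have h2 : g 2 = 0 := by
    by_contra h2
    refine hxy (fibre_eq_fibre_iff.2 ⟨-(g 2)⁻¹ * g 0, ?_⟩)
    rw [eq_neg_of_add_eq_zero_left hsum] at hdep
    linear_combination (norm := (match_scalars <;> field_simp <;> ring)) (g 2)⁻¹ • hdep
  have h1 : g 1 = 0 := by simpa [h2] using hsum
  have h0 : g 0 = 0 := by simpa [h1, h2, direction_ne_zero x] using hdep
  simp [Fin.forall_fin_succ, h0, h1, h2]

theorem natCard_eq [FiniteDimensional F V] (hsep : B.SeparatingLeft) (hv : v ≠ 0) :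
    Nat.card (AffineChart B v) = Nat.card F ^ (Module.finrank F V - 1) := by
  simpa using ncard_setOf_bilin_eq_zero hsep (b := ![]) (by simpa using hv)

theorem ncard_neighborSet [FiniteDimensional F V] (hB : B.IsAlt)
    (hsep : B.SeparatingLeft) (x : AffineChart B v) :
    ((affineGraph B v).neighborSet x).ncard = Nat.card F ^ (Module.finrank F V - 2) - 1 := by
  have hclosed := ncard_setOf_bilin_eq_zero hsep (linearIndependent_pair hB x)
  have hset : (affineGraph B v).neighborSet x =
      {z : AffineChart B v | ∀ i, B (![(x : V)] i) z = 0} \ {x} := by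
    ext z
    simp [affineGraph_adj hB, and_comm, eq_comm]
  rw [hset, Set.ncard_sdiff_singleton_of_mem (by simp [hB x]), hclosed]

theorem ncard_bilin_eq_zero_and_bilin_eq_zero [FiniteDimensional F V] (hB : B.IsAlt)
    (hsep : B.SeparatingLeft) {x y : AffineChart B v} (hxy : x.fibre ≠ y.fibre) :
    {z : AffineChart B v | B x z = 0 ∧ B y z = 0}.ncard =
      Nat.card F ^ (Module.finrank F V - 3) := by
  simpa [Fin.forall_fin_succ] using
    ncard_setOf_bilin_eq_zero hsep (linearIndependent_triple hB hxy)

theorem ncard_commonNeighbors_of_adj [FiniteDimensional F V] (hB : B.IsAlt)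
    (hsep : B.SeparatingLeft) {x y : AffineChart B v} (hxy : (affineGraph B v).Adj x y) :
    ((affineGraph B v).commonNeighbors x y).ncard =
      Nat.card F ^ (Module.finrank F V - 3) - 2 := by
  obtain ⟨hne, horth⟩ := (affineGraph_adj hB).1 hxy
  have hset : (affineGraph B v).commonNeighbors x y =
      {z : AffineChart B v | B x z = 0 ∧ B y z = 0} \ {x, y} := by
    ext z
    simp only [SimpleGraph.mem_commonNeighbors, affineGraph_adj hB, Set.mem_sdiff,
      Set.mem_ofPred_eq, Set.mem_insert_iff, Set.mem_singleton_iff, not_or, ne_comm (b := z)]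
    tauto
  have hsubset : {x, y} ⊆ {z : AffineChart B v | B x z = 0 ∧ B y z = 0} :=
    Set.pair_subset ⟨hB x, hB.eq_iff.1 horth⟩ ⟨horth, hB y⟩
  rw [hset, Set.ncard_sdiff hsubset, Set.ncard_pair hne,
    ncard_bilin_eq_zero_and_bilin_eq_zero hB hsep (fibre_ne_of_adj hB hxy)]

theorem ncard_commonNeighbors_of_not_adj [FiniteDimensional F V] (hB : B.IsAlt)
    (hsep : B.SeparatingLeft) {x y : AffineChart B v} (hfibre : x.fibre ≠ y.fibre)
    (hxy : ¬ (affineGraph B v).Adj x y) :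
    ((affineGraph B v).commonNeighbors x y).ncard = Nat.card F ^ (Module.finrank F V - 3) := by
  rw [← ncard_bilin_eq_zero_and_bilin_eq_zero hB hsep hfibre]
  congr 1
  ext z
  have hzx : B y z = 0 → z ≠ x := by
    rintro horth rfl
    exact hxy ((affineGraph_adj hB).2 ⟨ne_of_apply_ne _ hfibre, hB.eq_iff.1 horth⟩)
  have hzy : B x z = 0 → z ≠ y := by
    rintro horth rfl
    exact hxy ((affineGraph_adj hB).2 ⟨ne_of_apply_ne _ hfibre, horth⟩)
  simp only [SimpleGraph.mem_commonNeighbors, affineGraph_adj hB, Set.mem_ofPred_eq,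
    ne_comm (b := z)]
  tauto

theorem isCompleteGraphCover [FiniteDimensional F V] (hB : B.IsAlt)
    (hsep : B.SeparatingLeft) (v : V) :
    IsCompleteGraphCover (affineGraph B v) fibre
      (Nat.card F ^ (Module.finrank F V - 2) - 1)
      (Nat.card F ^ (Module.finrank F V - 3) - 2) (Nat.card F ^ (Module.finrank F V - 3)) where
  ne_of_adj := fibre_ne_of_adj hB
  existsUnique_adj := existsUnique_adj hB
  ncard_neighborSet := ncard_neighborSet hB hsep
  ncard_commonNeighbors_of_adj := ncard_commonNeighbors_of_adj hB hsep
  ncard_commonNeighbors_of_not_adj := ncard_commonNeighbors_of_not_adj hB hsep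

theorem nonempty (hsep : B.SeparatingLeft) (hv : v ≠ 0) :
    Nonempty (AffineChart B v) := by
  obtain ⟨y, hy⟩ := not_forall.1 (mt (hsep v) hv)
  exact ⟨⟨(B v y)⁻¹ • y, by simp [hy]⟩⟩

theorem not_injective_fibre (hB : B.IsAlt) (hsep : B.SeparatingLeft) (hv : v ≠ 0) :
    ¬ Function.Injective (fibre (B := B) (v := v)) := by
  obtain ⟨x⟩ := nonempty hsep hv
  let y : AffineChart B v := ⟨x + v, by simp [hB v, x.2]⟩
  refine Function.not_injective_iff.2 ⟨x, y, fibre_eq_fibre_iff.2 ⟨1, by simp [y]⟩, fun hxy ↦ hv ?_⟩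
  simpa [y] using congrArg Subtype.val hxy

theorem isDRG3 [Finite F] [FiniteDimensional F V] (hB : B.IsAlt)
    (hsep : B.SeparatingLeft) (hV : 4 ≤ Module.finrank F V) (hv : v ≠ 0) :
    IsDRG3 (affineGraph B v) (Nat.card F ^ (Module.finrank F V - 2) - 1)
      (Nat.card F ^ (Module.finrank F V - 2) - Nat.card F ^ (Module.finrank F V - 3)) 1
      1 (Nat.card F ^ (Module.finrank F V - 3)) (Nat.card F ^ (Module.finrank F V - 2) - 1) := by
  have hq : 1 < Nat.card F := Finite.one_lt_card
  have hk : 1 < Nat.card F ^ (Module.finrank F V - 2) := Nat.one_lt_pow (by lia) hq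
  have hc : 1 < Nat.card F ^ (Module.finrank F V - 3) := Nat.one_lt_pow (by lia) hq
  have hDRG := (isCompleteGraphCover hB hsep v).isDRG3 (by lia) (by lia)
    (not_injective_fibre hB hsep hv)
  convert hDRG using 1
  lia

end AffineChart

end AffineChart

section SymplecticGraph

open Projectivization

variable {F V : Type*} [Field F] [AddCommGroup V] [Module F V] {B : LinearMap.BilinForm F V}
  {v : V}

/-- The second subconstituent of a graph at a vertex, as the set of vertices at distance at least
two from it. -/
def secondSubconstituent {α : Type*} (G : SimpleGraph α) (v : α) : Set α :=
  {x | x ≠ v ∧ ¬ G.Adj v x}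

/-- The collinearity graph of the symplectic polar space of an alternating form `B`; it generalizes
`spGraph` to arbitrary dimension. -/
def symplecticGraph (B : LinearMap.BilinForm F V) : SimpleGraph (ℙ F V) :=
  SimpleGraph.fromRel fun x y ↦ B x.rep y.rep = 0

theorem bilin_rep_mk_eq_zero_iff {x y : V} (hx : x ≠ 0) (hy : y ≠ 0) :
    B (mk F x hx).rep (mk F y hy).rep = 0 ↔ B x y = 0 := by
  obtain ⟨a, ha⟩ := exists_smul_eq_mk_rep F x hx
  obtain ⟨b, hb⟩ := exists_smul_eq_mk_rep F y hy
  simp [← ha, ← hb, Units.smul_def]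

theorem symplecticGraph_adj_mk (hB : B.IsAlt) {x y : V} (hx : x ≠ 0) (hy : y ≠ 0) :
    (symplecticGraph B).Adj (mk F x hx) (mk F y hy) ↔ mk F x hx ≠ mk F y hy ∧ B x y = 0 := by
  simp only [symplecticGraph, SimpleGraph.fromRel_adj, bilin_rep_mk_eq_zero_iff,
    hB.eq_iff (x := y), or_self]

theorem mk_mem_secondSubconstituent_iff (hB : B.IsAlt) (hv : v ≠ 0) {x : V} (hx : x ≠ 0) :
    mk F x hx ∈ secondSubconstituent (symplecticGraph B) (mk F v hv) ↔ B v x ≠ 0 := by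
  have hne : B v x ≠ 0 → mk F x hx ≠ mk F v hv := by
    intro hvx heq
    obtain ⟨t, rfl⟩ := (mk_eq_mk_iff' F x v hx hv).1 heq
    simp [hB v] at hvx
  rw [secondSubconstituent, Set.mem_ofPred_eq, symplecticGraph_adj_mk hB, ne_comm (a := mk F v hv)]
  tauto

theorem AffineChart.coe_ne_zero (x : AffineChart B v) : (x : V) ≠ 0 := by
  intro hx
  simpa [hx] using x.2

/-- The point of the second subconstituent at `[v]` with affine coordinate `x`. -/
def AffineChart.toPoint (hB : B.IsAlt) (hv : v ≠ 0) (x : AffineChart B v) :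
    secondSubconstituent (symplecticGraph B) (mk F v hv) :=
  ⟨mk F x x.coe_ne_zero, (mk_mem_secondSubconstituent_iff hB hv _).2 (by simp [x.2])⟩

theorem AffineChart.toPoint_injective (hB : B.IsAlt) (hv : v ≠ 0) :
    Function.Injective (toPoint hB hv) := by
  intro x y hxy
  obtain ⟨t, ht⟩ := (mk_eq_mk_iff' F _ _ x.coe_ne_zero y.coe_ne_zero).1 (congrArg Subtype.val hxy)
  have ht1 : t = 1 := by simpa [x.2, y.2] using congrArg (B v) ht
  exact Subtype.ext (by simpa [ht1] using ht.symm)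

theorem AffineChart.toPoint_surjective (hB : B.IsAlt) (hv : v ≠ 0) :
    Function.Surjective (toPoint hB hv) := by
  rintro ⟨x, hx⟩
  induction x using Projectivization.ind with
  | h x hx0 =>
    have hvx : B v x ≠ 0 := (mk_mem_secondSubconstituent_iff hB hv hx0).1 hx
    exact ⟨⟨(B v x)⁻¹ • x, by simp [hvx]⟩,
      Subtype.ext ((mk_eq_mk_iff' F _ _ _ hx0).2 ⟨(B v x)⁻¹, rfl⟩)⟩

theorem AffineChart.adj_toPoint_iff (hB : B.IsAlt) (hv : v ≠ 0) {x y : AffineChart B v} :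
    (symplecticGraph B).Adj (toPoint hB hv x) (toPoint hB hv y) ↔ (affineGraph B v).Adj x y := by
  rw [affineGraph_adj hB, Ne, ← (toPoint_injective hB hv).eq_iff, Subtype.ext_iff]
  exact symplecticGraph_adj_mk hB _ _

/-- The affine chart as an isomorphism onto the second subconstituent. -/
noncomputable def affineGraphIso (hB : B.IsAlt) (hv : v ≠ 0) :
    affineGraph B v ≃g
      (symplecticGraph B).induce (secondSubconstituent (symplecticGraph B) (mk F v hv)) where
  toEquiv := .ofBijective (AffineChart.toPoint hB hv)
    ⟨AffineChart.toPoint_injective hB hv, AffineChart.toPoint_surjective hB hv⟩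
  map_rel_iff' := AffineChart.adj_toPoint_iff hB hv

theorem spGraph_secondSubconstituent_DRG_general [Finite F] [FiniteDimensional F V]
    (hB : B.IsAlt) (hnondeg : B.Nondegenerate) (hV : 4 ≤ Module.finrank F V) (v : ℙ F V) :
    (secondSubconstituent (symplecticGraph B) v).ncard =
        Nat.card F ^ (Module.finrank F V - 1) ∧
      IsDRG3 ((symplecticGraph B).induce (secondSubconstituent (symplecticGraph B) v))
        (Nat.card F ^ (Module.finrank F V - 2) - 1)
        (Nat.card F ^ (Module.finrank F V - 2) - Nat.card F ^ (Module.finrank F V - 3)) 1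
        1 (Nat.card F ^ (Module.finrank F V - 3)) (Nat.card F ^ (Module.finrank F V - 2) - 1) := by
  induction v using Projectivization.ind with
  | h v hv =>
    refine ⟨?_, (AffineChart.isDRG3 hB hnondeg.1 hV hv).of_iso (affineGraphIso hB hv)⟩
    rw [← Nat.card_coe_set_eq, ← Nat.card_congr (affineGraphIso hB hv).toEquiv,
      AffineChart.natCard_eq hnondeg.1 hv]

end SymplecticGraph

section StandardForm

variable (F : Type) [Field F]

/-- `sympForm` as a bilinear form. -/
def sympBilin : LinearMap.BilinForm F (Fin 4 → F) :=
  LinearMap.mk₂ F sympForm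
    (fun x y z ↦ by simp only [sympForm, Pi.add_apply]; ring)
    (fun t x y ↦ by simp only [sympForm, Pi.smul_apply, smul_eq_mul]; ring)
    (fun x y z ↦ by simp only [sympForm, Pi.add_apply]; ring)
    (fun t x y ↦ by simp only [sympForm, Pi.smul_apply, smul_eq_mul]; ring)

theorem symplecticGraph_sympBilin : symplecticGraph (sympBilin F) = spGraph F :=
  rfl

theorem isAlt_sympBilin : (sympBilin F).IsAlt := by
  intro x
  simp only [sympBilin, LinearMap.mk₂_apply, sympForm]
  ring

theorem nondegenerate_sympBilin : (sympBilin F).Nondegenerate := by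
  refine (isAlt_sympBilin F).isRefl.nondegenerate_iff_separatingLeft.2 fun x hx ↦ ?_
  have h0 : x 0 = 0 := by simpa [sympBilin, sympForm] using hx (Pi.single 1 1)
  have h1 : x 1 = 0 := by simpa [sympBilin, sympForm] using hx (Pi.single 0 1)
  have h2 : x 2 = 0 := by simpa [sympBilin, sympForm] using hx (Pi.single 3 1)
  have h3 : x 3 = 0 := by simpa [sympBilin, sympForm] using hx (Pi.single 2 1)
  ext i
  fin_cases i <;> assumption

end StandardForm

/-- for every vertex `v` of `Sp(4,q)`, the second subconstituent (the subgraph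
induced on the `q³` vertices distinct from `v` and not adjacent to `v`) is distance-regular
with intersection array `{q²−1, q²−q, 1; 1, q, q²−1}`. -/
theorem spGraph_secondSubconstituent_DRG (F : Type) [Field F] [Fintype F] (q : ℕ)
    (hq : Fintype.card F = q) (v : ℙ F (Fin 4 → F)) :
    {x : ℙ F (Fin 4 → F) | x ≠ v ∧ ¬ (spGraph F).Adj v x}.ncard = q ^ 3 ∧
    IsDRG3 ((spGraph F).induce {x | x ≠ v ∧ ¬ (spGraph F).Adj v x})
      (q ^ 2 - 1) (q ^ 2 - q) 1 1 q (q ^ 2 - 1) := by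
  have hDRG := spGraph_secondSubconstituent_DRG_general (isAlt_sympBilin F)
    (nondegenerate_sympBilin F) (Module.finrank_fin_fun F).ge v
  simpa only [symplecticGraph_sympBilin, secondSubconstituent, Module.finrank_fin_fun,
    Nat.card_eq_fintype_card, hq, Nat.reduceSub, pow_one] using hDRG
end

section
/- Let s, t ≥ 1, let Γ be a strongly regular graph with parameters ((s+1)(st+1), s(t+1), s−1, t+1), and let v be a vertex such that the subgraph induced on the neighbourhood N(v) is a disjoint union of cliques. Then each of these cliques has exactly s vertices (so there are exactly t+1 of them), and every vertex x with x ≠ v and x not adjacent to v has exactly one neighbour in each clique; that is, for every u ∈ N(v), the set N(x) ∩ ({u} ∪ (N(u) ∩ N(v))) has exactly one element. -/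
open scoped Classical

/-! Fix a clique `K` of `N(v)`. For adjacent `a, b ∈ K`, the vertex `v` together with `K \ {a, b}`
already accounts for all the common neighbours of `a` and `b` that the parameters allow, so
every common neighbour of `a` and `b` lies in `{v} ∪ N(v)`. Hence a vertex `x ≠ v` not adjacent
to `v` has at most one neighbour in each clique. Since `N(x) ∩ N(v)` has as many elements as there
are cliques, sending each of its elements to its clique is a bijection. -/

theorem encard_sUnion_of_forall_encard_eq {α : Type*} {P : Set (Set α)} (hP : P.Finite)
    (hdisj : P.PairwiseDisjoint id) {m : ℕ∞} (hm : ∀ S ∈ P, S.encard = m) :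
    (⋃₀ P).encard = P.encard * m :=
  calc (⋃₀ P).encard = ∑ᶠ S ∈ P, S.encard := by
        rw [Set.sUnion_eq_biUnion]; exact hP.encard_biUnion hdisj
    _ = ∑ᶠ S ∈ P, m := finsum_mem_congr rfl hm
    _ = P.encard * m := by
        rw [finsum_mem_eq_finite_toFinset_sum _ hP, Finset.sum_const, nsmul_eq_mul,
          hP.encard_eq_coe_toFinset_card]

section StronglyRegular

variable {V : Type*} [Fintype V] {G : SimpleGraph V} [DecidableRel G.Adj] {n k ℓ μ : ℕ} {a b : V}

theorem encard_neighborSet_of_isSRGWith (hG : G.IsSRGWith n k ℓ μ) (a : V) :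
    (G.neighborSet a).encard = k := by
  rw [← Set.coe_fintypeCard, G.card_neighborSet_eq_degree, hG.regular a]

theorem encard_commonNeighbors_of_isSRGWith_of_adj (hG : G.IsSRGWith n k ℓ μ)
    (hab : G.Adj a b) : (G.commonNeighbors a b).encard = ℓ := by
  rw [← Set.coe_fintypeCard, hG.of_adj a b hab]

theorem encard_commonNeighbors_of_isSRGWith_of_not_adj (hG : G.IsSRGWith n k ℓ μ)
    (hne : a ≠ b) (hab : ¬ G.Adj a b) : (G.commonNeighbors a b).encard = μ := by
  rw [← Set.coe_fintypeCard, hG.of_not_adj hne hab]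

end StronglyRegular

/-- The subgraph induced on the neighbourhood of `v` is a disjoint union of cliques. -/
def NeighborhoodIsCliqueUnion {V : Type*} (G : SimpleGraph V) (v : V) : Prop :=
  Equivalence fun x y : G.neighborSet v => x = y ∨ G.Adj ↑x ↑y

/-- The clique of `u` in the graph induced on the neighbourhood of `v`; meaningful only when `u`
is a neighbour of `v` and `NeighborhoodIsCliqueUnion G v` holds. -/
def localClique {V : Type*} (G : SimpleGraph V) (v u : V) : Set V :=
  {u} ∪ (G.neighborSet u ∩ G.neighborSet v)

/-- The set of cliques that make up the neighbourhood of `v`. -/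
def localCliques {V : Type*} (G : SimpleGraph V) (v : V) : Set (Set V) :=
  {S | ∃ u ∈ G.neighborSet v, S = localClique G v u}

section LocalCliques

variable {V : Type*} {G : SimpleGraph V} {v u a b x y : V}

theorem NeighborhoodIsCliqueUnion.adj_trans (hcl : NeighborhoodIsCliqueUnion G v)
    (ha : G.Adj v a) (hb : G.Adj v b) (hx : G.Adj v x) (hab : G.Adj a b) (hbx : G.Adj b x)
    (hne : a ≠ x) : G.Adj a x :=
  (hcl.trans (x := ⟨a, ha⟩) (y := ⟨b, hb⟩) (z := ⟨x, hx⟩) (.inr hab) (.inr hbx)).resolve_left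
    (hne <| congrArg Subtype.val ·)

theorem self_mem_localClique : u ∈ localClique G v u :=
  .inl rfl

theorem mem_localClique (hu : G.Adj v u) :
    y ∈ localClique G v u ↔ G.Adj v y ∧ (y = u ∨ G.Adj u y) := by
  simp only [localClique, Set.mem_union, Set.mem_singleton_iff, Set.mem_inter_iff,
    SimpleGraph.mem_neighborSet]
  grind

theorem encard_localClique : (localClique G v u).encard = (G.commonNeighbors u v).encard + 1 :=
  Set.encard_insert_of_notMem (G.notMem_commonNeighbors_left u v)

theorem NeighborhoodIsCliqueUnion.isClique_localClique (hcl : NeighborhoodIsCliqueUnion G v)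
    (hu : G.Adj v u) : G.IsClique (localClique G v u) := by
  intro a ha b hb hne
  obtain ⟨hva, rfl | hua⟩ := (mem_localClique hu).1 ha
  · exact ((mem_localClique hu).1 hb).2.resolve_left hne.symm
  · obtain ⟨hvb, rfl | hub⟩ := (mem_localClique hu).1 hb
    · exact hua.symm
    · exact hcl.adj_trans hva hu hvb hua.symm hub hne

theorem NeighborhoodIsCliqueUnion.localClique_eq_of_mem (hcl : NeighborhoodIsCliqueUnion G v)
    (hu : G.Adj v u) (ha : a ∈ localClique G v u) : localClique G v a = localClique G v u := by
  have subset_of_mem : ∀ {b c : V}, G.Adj v b → c ∈ localClique G v b →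
      localClique G v b ⊆ localClique G v c := by
    intro b c hb hc y hy
    refine (mem_localClique ((mem_localClique hb).1 hc).1).2 ⟨((mem_localClique hb).1 hy).1, ?_⟩
    exact or_iff_not_imp_left.2 fun hne => hcl.isClique_localClique hb hc hy (Ne.symm hne)
  have hva : G.Adj v a := ((mem_localClique hu).1 ha).1
  exact (subset_of_mem hva (subset_of_mem hu ha self_mem_localClique)).antisymm
    (subset_of_mem hu ha)

theorem NeighborhoodIsCliqueUnion.pairwiseDisjoint_localCliques
    (hcl : NeighborhoodIsCliqueUnion G v) : (localCliques G v).PairwiseDisjoint id := by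
  rintro _ ⟨a, ha, rfl⟩ _ ⟨b, hb, rfl⟩ hne
  refine Set.disjoint_left.2 fun y hya hyb => hne ?_
  rw [← hcl.localClique_eq_of_mem ha hya, hcl.localClique_eq_of_mem hb hyb]

theorem sUnion_localCliques : ⋃₀ localCliques G v = G.neighborSet v := by
  ext y
  constructor
  · rintro ⟨_, ⟨u, hu, rfl⟩, hy⟩
    exact ((mem_localClique hu).1 hy).1
  · exact fun hy => ⟨_, ⟨y, hy, rfl⟩, self_mem_localClique⟩

theorem localCliques_eq_image : localCliques G v = localClique G v '' G.neighborSet v :=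
  Set.ext fun _ => exists_congr fun _ => and_congr_right fun _ => eq_comm

theorem NeighborhoodIsCliqueUnion.encard_neighborSet (hcl : NeighborhoodIsCliqueUnion G v)
    (hfin : (G.neighborSet v).Finite) {m : ℕ∞}
    (hm : ∀ u ∈ G.neighborSet v, (localClique G v u).encard = m) :
    (G.neighborSet v).encard = (localCliques G v).encard * m := by
  have hP : (localCliques G v).Finite := localCliques_eq_image ▸ hfin.image _
  rw [← sUnion_localCliques]
  refine encard_sUnion_of_forall_encard_eq hP hcl.pairwiseDisjoint_localCliques ?_
  rintro _ ⟨u, hu, rfl⟩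
  exact hm u hu

theorem NeighborhoodIsCliqueUnion.commonNeighbors_eq_insert (hcl : NeighborhoodIsCliqueUnion G v)
    (ha : G.Adj v a) (hb : G.Adj v b) (hab : G.Adj a b)
    (hfin : (G.commonNeighbors a v).Finite)
    (hle : (G.commonNeighbors a b).encard ≤ (G.commonNeighbors a v).encard) :
    G.commonNeighbors a b = insert v (G.commonNeighbors a v \ {b}) := by
  have hv : v ∉ G.commonNeighbors a v \ {b} :=
    fun h => G.notMem_commonNeighbors_right a v h.1
  have hsub : insert v (G.commonNeighbors a v \ {b}) ⊆ G.commonNeighbors a b := by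
    rintro y (rfl | ⟨⟨hay, hvy⟩, hyb⟩)
    · exact ⟨ha.symm, hb.symm⟩
    · exact ⟨hay, hcl.adj_trans hb ha hvy hab.symm hay (Ne.symm hyb)⟩
  refine ((hfin.sdiff.insert v).eq_of_subset_of_encard_le hsub ?_).symm
  have hb_mem : b ∈ G.commonNeighbors a v := ⟨hab, hb⟩
  rwa [Set.encard_insert_of_notMem hv, Set.encard_sdiff_singleton_add_one hb_mem]

theorem NeighborhoodIsCliqueUnion.subsingleton_neighborSet_inter_localClique
    (hcl : NeighborhoodIsCliqueUnion G v)
    (htri : ∀ a ∈ G.neighborSet v, ∀ b ∈ G.neighborSet v, G.Adj a b →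
      G.commonNeighbors a b ⊆ insert v (G.neighborSet v))
    (hxv : x ≠ v) (hvx : ¬ G.Adj v x) (hu : G.Adj v u) :
    (G.neighborSet x ∩ localClique G v u).Subsingleton := by
  rintro a ⟨hxa, hau⟩ b ⟨hxb, hbu⟩
  by_contra hne
  have hab : G.Adj a b := hcl.isClique_localClique hu hau hbu hne
  have hx : x ∈ G.commonNeighbors a b := ⟨hxa.symm, hxb.symm⟩
  exact (htri a ((mem_localClique hu).1 hau).1 b ((mem_localClique hu).1 hbu).1 hab hx).elim
    hxv hvx

theorem encard_neighborSet_inter_localClique (hfin : (localCliques G v).Finite)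
    (hle : (localCliques G v).encard ≤ (G.commonNeighbors v x).encard)
    (hsub : ∀ u ∈ G.neighborSet v, (G.neighborSet x ∩ localClique G v u).Subsingleton)
    (hu : G.Adj v u) : (G.neighborSet x ∩ localClique G v u).encard = 1 := by
  have hinj : Set.InjOn (localClique G v) (G.commonNeighbors v x) := fun a ha b hb hab =>
    hsub a ha.1 ⟨ha.2, self_mem_localClique⟩ ⟨hb.2, hab ▸ self_mem_localClique⟩
  have himage : localClique G v '' G.commonNeighbors v x = localCliques G v := by
    refine hfin.eq_of_subset_of_encard_le' ?_ (hinj.encard_image.symm ▸ hle)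
    rintro _ ⟨a, ha, rfl⟩
    exact ⟨a, ha.1, rfl⟩
  obtain ⟨a, ha, hau⟩ : localClique G v u ∈ localClique G v '' G.commonNeighbors v x :=
    himage.symm ▸ ⟨u, hu, rfl⟩
  exact (Set.encard_le_one_iff_subsingleton.2 (hsub u hu)).antisymm
    (Set.one_le_encard_iff_nonempty.2 ⟨a, ha.2, hau ▸ self_mem_localClique⟩)

end LocalCliques

theorem cliques_of_firstSubconstituent_general {V : Type*} {G : SimpleGraph V} {v : V} {ℓ μ : ℕ}
    (hcl : NeighborhoodIsCliqueUnion G v)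
    (hdeg : (G.neighborSet v).encard = ((ℓ + 1) * μ : ℕ))
    (hadj : ∀ u ∈ G.neighborSet v, (G.commonNeighbors u v).encard = ℓ)
    (htri : ∀ a ∈ G.neighborSet v, ∀ b ∈ G.neighborSet v, G.Adj a b →
      (G.commonNeighbors a b).encard ≤ ℓ)
    (hnonadj : ∀ x, x ≠ v → ¬ G.Adj v x → μ ≤ (G.commonNeighbors v x).encard) :
    (∀ u ∈ G.neighborSet v, (localClique G v u).ncard = ℓ + 1) ∧
    (localCliques G v).ncard = μ ∧
    ∀ x, x ≠ v → ¬ G.Adj v x → ∀ u ∈ G.neighborSet v,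
      (G.neighborSet x ∩ localClique G v u).ncard = 1 := by
  have hsize : ∀ u ∈ G.neighborSet v, (localClique G v u).encard = ℓ + 1 := fun u hu => by
    rw [encard_localClique, hadj u hu]
  have hN : (G.neighborSet v).Finite := Set.finite_of_encard_eq_coe hdeg
  have hP : (localCliques G v).Finite := localCliques_eq_image ▸ hN.image _
  have hcount : (localCliques G v).encard = μ := by
    have hmul := (hcl.encard_neighborSet hN hsize).symm.trans hdeg
    rw [← hP.cast_ncard_eq] at hmul ⊢
    norm_cast at hmul ⊢
    exact Nat.eq_of_mul_eq_mul_left ℓ.succ_pos ((mul_comm _ _).trans hmul)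
  have htri_subset : ∀ a ∈ G.neighborSet v, ∀ b ∈ G.neighborSet v, G.Adj a b →
      G.commonNeighbors a b ⊆ insert v (G.neighborSet v) := fun a ha b hb hab => by
    rw [hcl.commonNeighbors_eq_insert ha hb hab (Set.finite_of_encard_eq_coe (hadj a ha))
      ((htri a ha b hb hab).trans_eq (hadj a ha).symm)]
    exact Set.insert_subset_insert (Set.sdiff_subset.trans Set.inter_subset_right)
  have hone : ∀ x, x ≠ v → ¬ G.Adj v x → ∀ u ∈ G.neighborSet v,
      (G.neighborSet x ∩ localClique G v u).encard = 1 := fun x hxv hvx u hu =>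
    encard_neighborSet_inter_localClique hP (hcount.trans_le (hnonadj x hxv hvx))
      (fun w hw => hcl.subsingleton_neighborSet_inter_localClique htri_subset hxv hvx hw) hu
  exact ⟨fun u hu => congrArg ENat.toNat (hsize u hu), congrArg ENat.toNat hcount,
    fun x hxv hvx u hu => congrArg ENat.toNat (hone x hxv hvx u hu)⟩

/-- Let `s, t ≥ 1`, let `Γ` be strongly regular with parameters
`((s+1)(st+1), s(t+1), s−1, t+1)`, and let `v` be a vertex whose neighbourhood induces a
disjoint union of cliques (i.e. "equal or adjacent" is an equivalence relation on `N(v)`).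
Then each clique `{u} ∪ (N(u) ∩ N(v))` has exactly `s` vertices, there are exactly `t + 1`
cliques, and every vertex `x ≠ v` not adjacent to `v` has exactly one neighbour in each
clique. -/
theorem cliques_of_firstSubconstituent {V : Type} [Fintype V]
    (s t : ℕ) (hs : 1 ≤ s) (ht : 1 ≤ t) (G : SimpleGraph V)
    (hG : G.IsSRGWith ((s + 1) * (s * t + 1)) (s * (t + 1)) (s - 1) (t + 1))
    (v : V)
    (hcl : Equivalence (fun x y : G.neighborSet v => x = y ∨ G.Adj ↑x ↑y)) :
    (∀ u ∈ G.neighborSet v,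
      ({u} ∪ (G.neighborSet u ∩ G.neighborSet v) : Set V).ncard = s) ∧
    {S : Set V | ∃ u ∈ G.neighborSet v,
      S = {u} ∪ (G.neighborSet u ∩ G.neighborSet v)}.ncard = t + 1 ∧
    ∀ x : V, x ≠ v → ¬ G.Adj v x → ∀ u ∈ G.neighborSet v,
      (G.neighborSet x ∩ ({u} ∪ (G.neighborSet u ∩ G.neighborSet v))).ncard = 1 := by
  obtain ⟨ℓ, rfl⟩ := Nat.exists_eq_add_of_le' hs
  exact cliques_of_firstSubconstituent_general hcl (encard_neighborSet_of_isSRGWith hG v)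
    (fun u hu => encard_commonNeighbors_of_isSRGWith_of_adj hG (G.adj_symm hu))
    (fun a _ b _ hab => (encard_commonNeighbors_of_isSRGWith_of_adj hG hab).le)
    (fun x hxv hvx => (encard_commonNeighbors_of_isSRGWith_of_not_adj hG hxv.symm hvx).ge)
end

section
/- Let s ≥ t ≥ 2, let Γ be a strongly regular graph with parameters ((s+1)(st+1), s(t+1), s−1, t+1), and let v be a regular point of Γ. Let x and y be distinct vertices, both distinct from v and not adjacent to v, such that y lies in the span {v,x}^{⊥⊥}. Then N(x) ∩ N(y) = N(v) ∩ N(x); in particular, x and y have no common neighbour outside the neighbourhood of v. -/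
open scoped Classical

/-- For a graph `G` and a set `X` of vertices, `X^⊥` is the set of vertices `w` such that
for every `x ∈ X`, either `w = x` or `w` is adjacent to `x`. -/
def perp {V : Type*} (G : SimpleGraph V) (X : Set V) : Set V :=
  {w | ∀ x ∈ X, w = x ∨ G.Adj w x}

/-- A vertex `v` of a strongly regular graph with parameters
`((s+1)(st+1), s(t+1), s−1, t+1)` is a regular point if (i) the subgraph induced on `N(v)`
is a disjoint union of cliques, and (ii) for every vertex `x ≠ v` not adjacent to `v`, the
span `{v,x}^{⊥⊥}` has exactly `t + 1` elements and is a coclique. -/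
def IsRegularPoint {V : Type*} (G : SimpleGraph V) (t : ℕ) (v : V) : Prop :=
  Equivalence (fun x y : G.neighborSet v => x = y ∨ G.Adj ↑x ↑y) ∧
  ∀ x : V, x ≠ v → ¬ G.Adj v x →
    (perp G (perp G {v, x})).ncard = t + 1 ∧
    ∀ y ∈ perp G (perp G {v, x}), ∀ z ∈ perp G (perp G {v, x}), ¬ G.Adj y z

/-!
A common neighbour of `v` and `x` lies in `{v,x}^⊥`, so it is equal or adjacent to every `y` in the
span `{v,x}^{⊥⊥}`. The span also contains `x` and, `v` being regular, is a coclique; hence `y` is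
not adjacent to `x`, and all common neighbours of `v` and `x` are common neighbours of `x` and `y`.
Both pairs are non-adjacent, so the two sets have the same finite size and coincide.
-/

section Span

variable {V : Type*} (G : SimpleGraph V)

theorem subset_perp_perp (X : Set V) : X ⊆ perp G (perp G X) :=
  fun _ hx _ hw ↦ (hw _ hx).imp Eq.symm G.adj_symm

theorem commonNeighbors_subset_perp_pair (v x : V) : G.commonNeighbors v x ⊆ perp G {v, x} := by
  rintro w ⟨hvw, hxw⟩ z (rfl | rfl)
  exacts [Or.inr hvw.symm, Or.inr hxw.symm]

variable {G} {v x y : V}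

theorem commonNeighbors_subset_of_mem_span (hxy : ¬ G.Adj x y)
    (hy : y ∈ perp G (perp G {v, x})) : G.commonNeighbors v x ⊆ G.commonNeighbors x y := by
  intro w hw
  have hxw : G.Adj x w := hw.2
  refine ⟨hxw, (hy w (commonNeighbors_subset_perp_pair G v x hw)).resolve_left ?_⟩
  rintro rfl
  exact hxy hxw

theorem IsRegularPoint.not_adj_of_mem_span {t : ℕ} (hv : IsRegularPoint G t v) (hxv : x ≠ v)
    (hvx : ¬ G.Adj v x) (hy : y ∈ perp G (perp G {v, x})) : ¬ G.Adj x y :=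
  (hv.2 x hxv hvx).2 x (subset_perp_perp G {v, x} (by simp)) y hy

theorem span_common_neighbors_general [∀ a b, Fintype (G.commonNeighbors a b)] {μ : ℕ}
    (hμ : Pairwise fun a b ↦ ¬ G.Adj a b → Fintype.card (G.commonNeighbors a b) = μ)
    (hxv : x ≠ v) (hvx : ¬ G.Adj v x) (hne : x ≠ y) (hxy : ¬ G.Adj x y)
    (hy : y ∈ perp G (perp G {v, x})) : G.commonNeighbors x y = G.commonNeighbors v x :=
  have hcard : Fintype.card (G.commonNeighbors x y) = Fintype.card (G.commonNeighbors v x) :=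
    (hμ hne hxy).trans (hμ hxv.symm hvx).symm
  (Set.eq_of_subset_of_card_le (commonNeighbors_subset_of_mem_span hxy hy) hcard.le).symm

end Span

/-- Let `s ≥ t ≥ 2`, `Γ` strongly regular with parameters
`((s+1)(st+1), s(t+1), s−1, t+1)` and `v` a regular point. If `x, y` are distinct vertices,
both distinct from `v` and not adjacent to `v`, with `y` in the span `{v,x}^{⊥⊥}`, then
`N(x) ∩ N(y) = N(v) ∩ N(x)`; in particular `x` and `y` have no common neighbour outside
`N(v)`. -/
theorem span_common_neighbors {V : Type} [Fintype V]
    (s t : ℕ) (hts : t ≤ s) (ht : 2 ≤ t) (G : SimpleGraph V)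
    (hG : G.IsSRGWith ((s + 1) * (s * t + 1)) (s * (t + 1)) (s - 1) (t + 1))
    (v : V) (hreg : IsRegularPoint G t v)
    (x y : V) (hxy : x ≠ y) (hxv : x ≠ v) (hyv : y ≠ v)
    (hxa : ¬ G.Adj v x) (hya : ¬ G.Adj v y)
    (hspan : y ∈ perp G (perp G {v, x})) :
    G.neighborSet x ∩ G.neighborSet y = G.neighborSet v ∩ G.neighborSet x ∧
    ∀ w ∈ G.neighborSet x ∩ G.neighborSet y, w ∈ G.neighborSet v := by
  have h := span_common_neighbors_general hG.of_not_adj hxv hxa hxy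
    (hreg.not_adj_of_mem_span hxv hxa hspan) hspan
  exact ⟨h, fun _ hw ↦ (h.subset hw).1⟩
end

section
/- (Godsil–McKay switching.) Let Γ be a finite simple graph and let {D, C₁, …, C_m} be a partition of its vertex set such that: for all i, j and all x, y ∈ C_i, x and y have the same number of neighbours in C_j; and for every d ∈ D and every i, the number of neighbours of d in C_i is 0, |C_i|/2, or |C_i|. Let Γ' be the graph obtained from Γ by, for every d ∈ D and every i with |N(d) ∩ C_i| = |C_i|/2, replacing the edges from d to C_i by the edges from d to the other |C_i|/2 vertices of C_i (all other adjacencies unchanged). Then the adjacency matrices of Γ and Γ' (over ℚ) have the same characteristic polynomial. -/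
open scoped Classical

/-!
Split the vertices outside the cells `C i` into singletons; together with the cells they form a
partition of `V`. Let `P` be the matrix averaging over its parts. Then `Q = 2P - 1` is an
involution, and comparing the entries of `Q * A` and `B * Q`, for the adjacency matrices `A`, `B` of
the two graphs, shows that `Q * A = B * Q`: between two cells, equitability says that the row means
and the column means of `A` agree, while between a vertex `d` outside and a cell `S`, switching says
that on `S` the mean of row `d` of `A` and that of `B` are both half of the constant sum of these
rows. So `A` and `B` are similar over `ℚ`, and the equality of their characteristic polynomials
descends to `ℤ`.
-/

open Finset Matrix
open scoped BigOperators Function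

theorem charpoly_eq_of_mul_eq_mul {n R : Type*} [Fintype n] [DecidableEq n] [CommRing R]
    {Q A B : Matrix n n R} (hQ : IsUnit Q) (h : Q * A = B * Q) : A.charpoly = B.charpoly := by
  obtain ⟨U, rfl⟩ := hQ
  rw [← charpoly_units_conj U A, h, mul_assoc, ← coe_units_inv, U.mul_inv, mul_one]

theorem isUnit_two_mul_sub_one {R : Type*} [Ring R] {p : R} (hp : IsIdempotentElem p) :
    IsUnit (2 * p - 1) := by
  have hsq : (2 * p - 1) * (2 * p - 1) = 1 := by
    calc (2 * p - 1) * (2 * p - 1) = 4 * (p * p) - 4 * p + 1 := by noncomm_ring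
      _ = 1 := by rw [hp.eq, sub_self, zero_add]
  exact ⟨⟨_, _, hsq, hsq⟩, rfl⟩

section Mean

variable {α β K : Type*} [Field K] [CharZero K]

theorem eq_of_expect_row_eq_of_expect_col_eq {s : Finset α} {t : Finset β} {f : α → β → K}
    {a b : K} (hs : s.Nonempty) (ht : t.Nonempty) (hrow : ∀ i ∈ s, 𝔼 j ∈ t, f i j = a)
    (hcol : ∀ j ∈ t, 𝔼 i ∈ s, f i j = b) : a = b :=
  calc a = 𝔼 i ∈ s, 𝔼 j ∈ t, f i j := by rw [expect_congr rfl hrow, expect_const hs]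
    _ = 𝔼 j ∈ t, 𝔼 i ∈ s, f i j := expect_comm ..
    _ = b := by rw [expect_congr rfl hcol, expect_const ht]

theorem expect_eq_expect_of_add_eq {s : Finset α} {a b : α → K}
    (h : ∀ y ∈ s, a y + b y = 2 * 𝔼 z ∈ s, a z) : 𝔼 z ∈ s, b z = 𝔼 z ∈ s, a z := by
  obtain rfl | hs := s.eq_empty_or_nonempty
  · simp only [expect_empty]
  · have hsum : 𝔼 z ∈ s, a z + 𝔼 z ∈ s, b z = 2 * 𝔼 z ∈ s, a z := by
      rw [← expect_add_distrib, expect_congr rfl h, expect_const hs]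
    linear_combination hsum

end Mean

section Part

variable {V : Type*} [DecidableEq V] {s : Finset V} (P : Finpartition s) {x y : V}

theorem part_eq_part_of_mem (h : y ∈ P.part x) : P.part y = P.part x :=
  P.part_eq_of_mem (P.part_mem.2 (P.part_nonempty.1 ⟨y, h⟩)) h

theorem mem_part_comm : y ∈ P.part x ↔ x ∈ P.part y := by
  simp only [P.mem_part_iff_exists, and_comm]

end Part

section PartMean

variable {V : Type*} [Fintype V] [DecidableEq V] (K : Type*) [Field K]
  (P : Finpartition (univ : Finset V))

/-- The matrix of the projection of `V → K` onto the functions constant on the parts of `P`, which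
replaces a function by its mean over each part. -/
def partMeanMatrix : Matrix V V K :=
  of fun x y => if y ∈ P.part x then (#(P.part x) : K)⁻¹ else 0

variable {K}

theorem partMeanMatrix_apply_eq_of_mem {x z : V} (h : z ∈ P.part x) (y : V) :
    partMeanMatrix K P z y = partMeanMatrix K P x y := by
  simp only [partMeanMatrix, of_apply, part_eq_part_of_mem P h]

theorem isSymm_partMeanMatrix : (partMeanMatrix K P).IsSymm := by
  ext x y
  simp only [partMeanMatrix, transpose_apply, of_apply, mem_part_comm P (x := y)]
  split_ifs with h
  · rw [part_eq_part_of_mem P h]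
  · rfl

variable [CharZero K]

theorem partMeanMatrix_mul_apply (M : Matrix V V K) (x y : V) :
    (partMeanMatrix K P * M) x y = 𝔼 z ∈ P.part x, M z y := by
  simp [partMeanMatrix, mul_apply, expect_eq_sum_div_card, ← mul_sum, div_eq_inv_mul]

theorem mul_partMeanMatrix_apply (M : Matrix V V K) (x y : V) :
    (M * partMeanMatrix K P) x y = 𝔼 z ∈ P.part y, M x z := by
  rw [← transpose_apply (M * _), transpose_mul, (isSymm_partMeanMatrix P).eq,
    partMeanMatrix_mul_apply]
  rfl

theorem isIdempotentElem_partMeanMatrix : IsIdempotentElem (partMeanMatrix K P) := by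
  ext x y
  rw [partMeanMatrix_mul_apply,
    expect_congr rfl fun z hz => partMeanMatrix_apply_eq_of_mem P hz y,
    expect_const (P.part_nonempty.2 (mem_univ x))]

theorem charpoly_eq_of_two_mul_expect_part_sub_eq {A B : Matrix V V K}
    (h : ∀ x y, 2 * 𝔼 z ∈ P.part x, A z y - A x y = 2 * 𝔼 z ∈ P.part y, B x z - B x y) :
    A.charpoly = B.charpoly := by
  refine charpoly_eq_of_mul_eq_mul
    (isUnit_two_mul_sub_one (isIdempotentElem_partMeanMatrix (K := K) P)) ?_
  have hA : (2 * partMeanMatrix K P - 1) * A = (2 : K) • (partMeanMatrix K P * A) - A := by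
    rw [sub_mul, one_mul, mul_assoc, two_mul, two_smul]
  have hB : B * (2 * partMeanMatrix K P - 1) = (2 : K) • (B * partMeanMatrix K P) - B := by
    rw [mul_sub, mul_one, two_mul, mul_add, two_smul]
  ext x y
  simpa only [hA, hB, Matrix.sub_apply, Matrix.smul_apply, smul_eq_mul, partMeanMatrix_mul_apply,
    mul_partMeanMatrix_apply] using h x y

end PartMean

section CellPartition

variable {V ι : Type*} [Fintype V] {C : ι → Set V} (hC : Pairwise (Disjoint on C))

/-- The partition of `V` whose parts are the nonempty cells `C i` and the singletons of the
vertices outside every cell. -/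
noncomputable def cellPartition : Finpartition (univ : Finset V) :=
  .ofSetoid
    { r := fun x y => x = y ∨ ∃ i, x ∈ C i ∧ y ∈ C i
      iseqv :=
        { refl := fun _ => .inl rfl
          symm := by
            rintro x y (rfl | ⟨i, hx, hy⟩)
            exacts [.inl rfl, .inr ⟨i, hy, hx⟩]
          trans := by
            rintro x y z (rfl | ⟨i, hx, hy⟩) (rfl | ⟨j, hy', hz⟩)
            · exact .inl rfl
            · exact .inr ⟨j, hy', hz⟩
            · exact .inr ⟨i, hx, hy⟩
            · obtain rfl := hC.eq (Set.not_disjoint_iff.2 ⟨y, hy, hy'⟩)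
              exact .inr ⟨i, hx, hz⟩ } }

theorem mem_part_cellPartition {x y : V} :
    y ∈ (cellPartition hC).part x ↔ x = y ∨ ∃ i, x ∈ C i ∧ y ∈ C i :=
  Finpartition.mem_part_ofSetoid_iff_rel

theorem part_cellPartition_of_mem {x : V} {i : ι} (hx : x ∈ C i) :
    (cellPartition hC).part x = (C i).toFinset := by
  ext y
  rw [mem_part_cellPartition, Set.mem_toFinset]
  constructor
  · rintro (rfl | ⟨j, hxj, hyj⟩)
    · exact hx
    · rwa [hC.eq (Set.not_disjoint_iff.2 ⟨x, hx, hxj⟩)]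
  · exact fun hy => .inr ⟨i, hx, hy⟩

theorem part_cellPartition_of_notMem {x : V} (hx : x ∉ ⋃ i, C i) :
    (cellPartition hC).part x = {x} := by
  ext y
  rw [mem_part_cellPartition, mem_singleton, eq_comm]
  exact or_iff_left fun ⟨i, hxi, _⟩ => hx (Set.mem_iUnion_of_mem i hxi)

end CellPartition

section AdjMatrix

variable {V K : Type*} [Field K] [CharZero K] {G G' : SimpleGraph V} [DecidableRel G.Adj]
  [DecidableRel G'.Adj] {S T : Set V} [Fintype S] [Fintype T]

variable (G) in
theorem expect_adjMatrix (x : V) :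
    𝔼 z ∈ S.toFinset, G.adjMatrix K x z = (G.neighborSet x ∩ S).ncard / S.ncard := by
  have hnbr : G.neighborSet x ∩ S = ({z ∈ S.toFinset | G.Adj x z} : Finset V) := by
    ext z
    simp [and_comm]
  rw [hnbr, Set.ncard_coe_finset, Set.ncard_eq_toFinset_card', expect_eq_sum_div_card]
  simp [SimpleGraph.adjMatrix_apply]

theorem expect_adjMatrix_col_eq_row
    (hST : ∀ x ∈ S, ∀ y ∈ S, (G.neighborSet x ∩ T).ncard = (G.neighborSet y ∩ T).ncard)
    (hTS : ∀ x ∈ T, ∀ y ∈ T, (G.neighborSet x ∩ S).ncard = (G.neighborSet y ∩ S).ncard)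
    {x y : V} (hx : x ∈ S) (hy : y ∈ T) :
    𝔼 z ∈ S.toFinset, G.adjMatrix K z y = 𝔼 z ∈ T.toFinset, G.adjMatrix K x z := by
  refine (eq_of_expect_row_eq_of_expect_col_eq (f := G.adjMatrix K)
    ⟨x, Set.mem_toFinset.2 hx⟩ ⟨y, Set.mem_toFinset.2 hy⟩ ?_ ?_).symm
  · intro z hz
    simp only [expect_adjMatrix, hST z (Set.mem_toFinset.1 hz) x hx]
  · intro z hz
    simp only [(G.isSymm_adjMatrix (α := K)).apply z, (G.isSymm_adjMatrix (α := K)).apply y,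
      expect_adjMatrix, hTS z (Set.mem_toFinset.1 hz) y hy]

theorem adjMatrix_add_adjMatrix_of_switch {d y : V}
    (hd : (G.neighborSet d ∩ S).ncard = 0 ∨ 2 * (G.neighborSet d ∩ S).ncard = S.ncard ∨
      (G.neighborSet d ∩ S).ncard = S.ncard)
    (hswitch : (2 * (G.neighborSet d ∩ S).ncard = S.ncard → (G'.Adj d y ↔ ¬ G.Adj d y)) ∧
      (¬ 2 * (G.neighborSet d ∩ S).ncard = S.ncard → (G'.Adj d y ↔ G.Adj d y)))
    (hy : y ∈ S) :
    G.adjMatrix K d y + G'.adjMatrix K d y = 2 * 𝔼 z ∈ S.toFinset, G.adjMatrix K d z := by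
  have hS : (S.ncard : K) ≠ 0 := Nat.cast_ne_zero.2 (Set.ncard_ne_zero_of_mem hy)
  rw [expect_adjMatrix, ← mul_div_assoc]
  by_cases hhalf : 2 * (G.neighborSet d ∩ S).ncard = S.ncard
  · have hone : 2 * ((G.neighborSet d ∩ S).ncard : K) / S.ncard = 1 := by
      rw [div_eq_one_iff_eq hS]
      exact_mod_cast hhalf
    rw [hone, SimpleGraph.adjMatrix_apply, SimpleGraph.adjMatrix_apply]
    by_cases hadj : G.Adj d y <;> simp [hswitch.1 hhalf, hadj]
  · simp only [SimpleGraph.adjMatrix_apply, hswitch.2 hhalf]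
    obtain hnone | hhalf' | hall := hd
    · have hadj : ¬ G.Adj d y := fun hadj =>
        Set.ncard_ne_zero_of_mem (s := G.neighborSet d ∩ S) ⟨hadj, hy⟩
          (S.toFinite.inter_of_right _) hnone
      simp [hnone, hadj]
    · exact absurd hhalf' hhalf
    · have hadj : G.Adj d y :=
        (Set.inter_eq_right.1 <| Set.eq_of_subset_of_ncard_le Set.inter_subset_right hall.ge) hy
      rw [if_pos hadj, hall, mul_div_cancel_right₀ _ hS, one_add_one_eq_two]

end AdjMatrix

section ChangeOfRing

variable {V : Type*} [Fintype V] [DecidableEq V]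

theorem map_charpoly_adjMatrix (G : SimpleGraph V) [DecidableRel G.Adj] {R S : Type*} [CommRing R]
    [CommRing S] (f : R →+* S) :
    (G.adjMatrix R).charpoly.map f = (G.adjMatrix S).charpoly := by
  have hmap : (G.adjMatrix R).map f = G.adjMatrix S := by
    ext x y
    rw [map_apply, SimpleGraph.adjMatrix_apply, SimpleGraph.adjMatrix_apply, apply_ite f, map_one,
      map_zero]
  rw [← charpoly_map, hmap]

theorem charpoly_adjMatrix_eq_of_charZero {G G' : SimpleGraph V} [DecidableRel G.Adj]
    [DecidableRel G'.Adj] {K : Type*} [CommRing K] [CharZero K]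
    (h : (G.adjMatrix K).charpoly = (G'.adjMatrix K).charpoly) (R : Type*) [CommRing R] :
    (G.adjMatrix R).charpoly = (G'.adjMatrix R).charpoly := by
  have hint : (G.adjMatrix ℤ).charpoly = (G'.adjMatrix ℤ).charpoly :=
    Polynomial.map_injective (Int.castRingHom K) Int.cast_injective <| by
      rw [map_charpoly_adjMatrix, map_charpoly_adjMatrix, h]
  rw [← map_charpoly_adjMatrix G (Int.castRingHom R), hint, map_charpoly_adjMatrix]

end ChangeOfRing

theorem godsil_mckay_switching_general {V ι R : Type*} [Fintype V] [CommRing R]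
    (G G' : SimpleGraph V) (C : ι → Set V) (hC : Pairwise (Disjoint on C))
    (hequit : ∀ i j, ∀ x ∈ C i, ∀ y ∈ C i,
      (G.neighborSet x ∩ C j).ncard = (G.neighborSet y ∩ C j).ncard)
    (hD : ∀ d ∉ ⋃ i, C i, ∀ i,
      (G.neighborSet d ∩ C i).ncard = 0 ∨
      2 * (G.neighborSet d ∩ C i).ncard = (C i).ncard ∨
      (G.neighborSet d ∩ C i).ncard = (C i).ncard)
    (hswitch : ∀ d ∉ ⋃ i, C i, ∀ i, ∀ y ∈ C i,
      (2 * (G.neighborSet d ∩ C i).ncard = (C i).ncard → (G'.Adj d y ↔ ¬ G.Adj d y)) ∧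
      (¬ 2 * (G.neighborSet d ∩ C i).ncard = (C i).ncard → (G'.Adj d y ↔ G.Adj d y)))
    (hDD : ∀ d ∉ ⋃ i, C i, ∀ e ∉ ⋃ i, C i, (G'.Adj d e ↔ G.Adj d e))
    (hCC : ∀ i j, ∀ x ∈ C i, ∀ y ∈ C j, (G'.Adj x y ↔ G.Adj x y)) :
    (G.adjMatrix R).charpoly = (G'.adjMatrix R).charpoly := by
  refine charpoly_adjMatrix_eq_of_charZero (K := ℚ)
    (charpoly_eq_of_two_mul_expect_part_sub_eq (cellPartition hC) fun x y => ?_) R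
  have hsum {d} (hd : d ∉ ⋃ i, C i) (i) : ∀ y ∈ (C i).toFinset,
      G.adjMatrix ℚ d y + G'.adjMatrix ℚ d y = 2 * 𝔼 z ∈ (C i).toFinset, G.adjMatrix ℚ d z :=
    fun y hy => have hy := Set.mem_toFinset.1 hy
      adjMatrix_add_adjMatrix_of_switch (hD d hd i) (hswitch d hd i y hy) hy
  by_cases hx : x ∈ ⋃ i, C i <;> by_cases hy : y ∈ ⋃ i, C i
  · obtain ⟨i, hxi⟩ := Set.mem_iUnion.1 hx
    obtain ⟨j, hyj⟩ := Set.mem_iUnion.1 hy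
    have hrow : ∀ z ∈ (C j).toFinset, G'.adjMatrix ℚ x z = G.adjMatrix ℚ x z := fun z hz => by
      simp only [SimpleGraph.adjMatrix_apply, hCC i j x hxi z (Set.mem_toFinset.1 hz)]
    rw [part_cellPartition_of_mem hC hxi, part_cellPartition_of_mem hC hyj, expect_congr rfl hrow,
      hrow y (Set.mem_toFinset.2 hyj),
      expect_adjMatrix_col_eq_row (hequit i j) (hequit j i) hxi hyj]
  · obtain ⟨i, hxi⟩ := Set.mem_iUnion.1 hx
    rw [part_cellPartition_of_mem hC hxi, part_cellPartition_of_notMem hC hy, expect_singleton]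
    simp only [(G.isSymm_adjMatrix (α := ℚ)).apply y, (G'.isSymm_adjMatrix (α := ℚ)).apply y]
    linear_combination -hsum hy i x (Set.mem_toFinset.2 hxi)
  · obtain ⟨j, hyj⟩ := Set.mem_iUnion.1 hy
    rw [part_cellPartition_of_notMem hC hx, part_cellPartition_of_mem hC hyj, expect_singleton,
      expect_eq_expect_of_add_eq (hsum hx j)]
    linear_combination hsum hx j y (Set.mem_toFinset.2 hyj)
  · simp only [part_cellPartition_of_notMem hC hx, part_cellPartition_of_notMem hC hy,
      expect_singleton, SimpleGraph.adjMatrix_apply, hDD x hx y hy]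

/-- Godsil–McKay switching. Let `Γ` (= `G`) be a finite graph with a
partition `{D, C₁, …, C_m}` of its vertex set such that `{C₁, …, C_m}` is equitable
(any two vertices of `C i` have the same number of neighbours in each `C j`) and every
`d ∈ D` has `0`, `|C i|/2` or `|C i|` neighbours in each `C i`. If `Γ'` (= `G'`) is
obtained by switching the edges between each `d ∈ D` and each `C i` containing exactly
half of the neighbours of `d` (all other adjacencies unchanged), then `Γ` and `Γ'` have
the same characteristic polynomial. -/
theorem godsil_mckay_switching {V : Type} [Fintype V]
    (G G' : SimpleGraph V) (m : ℕ) (D : Set V) (C : Fin m → Set V)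
    (hcover : D ∪ (⋃ i, C i) = Set.univ)
    (hDC : ∀ i, Disjoint D (C i))
    (hCC : ∀ i j, i ≠ j → Disjoint (C i) (C j))
    (hequit : ∀ i j, ∀ x ∈ C i, ∀ y ∈ C i,
      (G.neighborSet x ∩ C j).ncard = (G.neighborSet y ∩ C j).ncard)
    (hD : ∀ d ∈ D, ∀ i,
      (G.neighborSet d ∩ C i).ncard = 0 ∨
      2 * (G.neighborSet d ∩ C i).ncard = (C i).ncard ∨
      (G.neighborSet d ∩ C i).ncard = (C i).ncard)
    (hswitch : ∀ d ∈ D, ∀ i, ∀ y ∈ C i,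
      (2 * (G.neighborSet d ∩ C i).ncard = (C i).ncard →
        (G'.Adj d y ↔ ¬ G.Adj d y)) ∧
      (¬ 2 * (G.neighborSet d ∩ C i).ncard = (C i).ncard →
        (G'.Adj d y ↔ G.Adj d y)))
    (hDD : ∀ d ∈ D, ∀ e ∈ D, (G'.Adj d e ↔ G.Adj d e))
    (hCCadj : ∀ i j, ∀ x ∈ C i, ∀ y ∈ C j, (G'.Adj x y ↔ G.Adj x y)) :
    Matrix.charpoly (G.adjMatrix ℚ) = Matrix.charpoly (G'.adjMatrix ℚ) := by
  obtain rfl : D = (⋃ i, C i)ᶜ :=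
    (isCompl_iff.2 ⟨Set.disjoint_iUnion_right.2 hDC, codisjoint_iff.2 hcover⟩).eq_compl
  exact godsil_mckay_switching_general G G' C (fun i j => hCC i j) hequit hD hswitch hDD hCCadj
end
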